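/- For every tour σ on {1,…,r} with incidence vector x and positions u, the inequality −2u_i + u_j + u_k + (2r−8)(x_{ij} + x_{ik}) + (2r−2)(x_{ji} + x_{ki}) + (2r−5)(x_{jk} + x_{kj}) ≤ 4r − 10 holds for all pairwise distinct i, j, k ∈ {2,…,r}. -/

import Mathlib

/-- A tour on the node set `Fin r`: a permutation consisting of a single cycle
through all `r` nodes. -/
def IsTour {r : ℕ} (σ : Equiv.Perm (Fin r)) : Prop :=
  σ.IsCycle ∧ ∀ i, σ i ≠ i

/-- The incidence vector of a tour `σ`: `x i j = 1` iff `j = σ i`. -/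
def incidence {r : ℕ} (σ : Equiv.Perm (Fin r)) (i j : Fin r) : ℝ :=
  if σ i = j then 1 else 0

/-- `u` gives the positions of the nodes along the tour `σ`: `u i` is the
(unique) integer in `{1, …, r}` with `σ^(u i − 1) 1 = i` (node `1` is index `0`). -/
def IsPositions {r : ℕ} [NeZero r] (σ : Equiv.Perm (Fin r)) (u : Fin r → ℕ) : Prop :=
  ∀ i, 1 ≤ u i ∧ u i ≤ r ∧ (σ ^ (u i - 1)) (0 : Fin r) = i

theorem pos_succ {r : ℕ} [NeZero r] (σ : Equiv.Perm (Fin r))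
    (u : Fin r → ℕ) (hu : IsPositions σ u) (a b : Fin r) (hb : b ≠ 0) (h : σ a = b) :
    u b = u a + 1 := by
  have hsurj : Function.Surjective (fun n : Fin r => (σ ^ (n : ℕ)) (0 : Fin r)) := by
    intro c
    obtain ⟨h1, h2, h3⟩ := hu c
    exact ⟨⟨u c - 1, by omega⟩, h3⟩
  have hinj := Finite.injective_iff_surjective.mpr hsurj
  obtain ⟨a1, a2, a3⟩ := hu a
  obtain ⟨b1, b2, b3⟩ := hu b
  have hb2 : 2 ≤ u b := by
    by_contra hlt
    have : u b - 1 = 0 := by omega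
    rw [this] at b3
    exact hb (by simpa using b3.symm)
  obtain ⟨m, hm⟩ : ∃ m, u b = m + 2 := ⟨u b - 2, by omega⟩
  have e : u b - 1 = m + 1 := by omega
  rw [e, pow_succ', Equiv.Perm.mul_apply, ← h] at b3
  have h4 := σ.injective b3
  have h5 := @hinj ⟨u a - 1, by omega⟩ ⟨m, by omega⟩ (a3.trans h4.symm)
  have h6 : u a - 1 = m := congrArg Fin.val h5
  omega

theorem pos_ne {r : ℕ} [NeZero r] (σ : Equiv.Perm (Fin r))
    (u : Fin r → ℕ) (hu : IsPositions σ u) (a b : Fin r) (h : a ≠ b) :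
    u a ≠ u b := by
  intro e
  apply h
  rw [← (hu a).2.2, ← (hu b).2.2, e]

theorem pos_ge_two {r : ℕ} [NeZero r] (σ : Equiv.Perm (Fin r))
    (u : Fin r → ℕ) (hu : IsPositions σ u) (b : Fin r) (hb : b ≠ 0) :
    2 ≤ u b := by
  obtain ⟨b1, b2, b3⟩ := hu b
  by_contra hlt
  have : u b - 1 = 0 := by omega
  rw [this] at b3
  exact hb (by simpa using b3.symm)

theorem radical_reverse_valid (r : ℕ) [NeZero r] (hr : 4 ≤ r)
    (σ : Equiv.Perm (Fin r)) (hσ : IsTour σ)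
    (u : Fin r → ℕ) (hu : IsPositions σ u)
    (i j k : Fin r) (hi : i ≠ 0) (hj : j ≠ 0) (hk : k ≠ 0)
    (hij : i ≠ j) (hik : i ≠ k) (hjk : j ≠ k) :
    -(2 * (u i : ℝ)) + (u j : ℝ) + (u k : ℝ)
      + (2 * (r : ℝ) - 8) * (incidence σ i j + incidence σ i k)
      + (2 * (r : ℝ) - 2) * (incidence σ j i + incidence σ k i)
      + (2 * (r : ℝ) - 5) * (incidence σ j k + incidence σ k j)
      ≤ 4 * (r : ℝ) - 10 := by
  have gi := pos_ge_two σ u hu i hi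
  have gj := pos_ge_two σ u hu j hj
  have gk := pos_ge_two σ u hu k hk
  have li := (hu i).2.1
  have lj := (hu j).2.1
  have lk := (hu k).2.1
  have nij := pos_ne σ u hu i j hij
  have nik := pos_ne σ u hu i k hik
  have njk := pos_ne σ u hu j k hjk
  have eij := pos_succ σ u hu i j hj
  have eik := pos_succ σ u hu i k hk
  have eji := pos_succ σ u hu j i hi
  have eki := pos_succ σ u hu k i hi
  have ejk := pos_succ σ u hu j k hk
  have ekj := pos_succ σ u hu k j hj
  have key : -(2 * (u i : ℤ)) + (u j : ℤ) + (u k : ℤ)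
      + (2 * (r : ℤ) - 8) * ((if σ i = j then 1 else 0) + (if σ i = k then 1 else 0))
      + (2 * (r : ℤ) - 2) * ((if σ j = i then 1 else 0) + (if σ k = i then 1 else 0))
      + (2 * (r : ℤ) - 5) * ((if σ j = k then 1 else 0) + (if σ k = j then 1 else 0))
      ≤ 4 * (r : ℤ) - 10 := by
    clear hu hσ
    split_ifs <;>
      (try replace eij := eij (by assumption)) <;>
      (try replace eik := eik (by assumption)) <;>
      (try replace eji := eji (by assumption)) <;>
      (try replace eki := eki (by assumption)) <;>
      (try replace ejk := ejk (by assumption)) <;>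
      (try replace ekj := ekj (by assumption)) <;>
      omega
  unfold incidence
  exact_mod_cast key
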